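/- Let G be a k-connected finite simple graph and let P and Q be longest paths in G. If |V(P) ∩ V(Q)| ≤ k − 1, then there exists a longest path Q' in G such that V(Q') = V(Q) and neither end vertex of Q' lies on P. -/

import Mathlib

/-!
The proof is by Pósa rotation. Write `Q = q₀ q₁ … qₙ` and suppose `q₀` lies on `P`. Since `Q` is a
longest path, all neighbours of `q₀` lie on `Q`, and by `k`-connectivity there are at least `k` of
them. Every neighbour `qᵢ₊₁` of `q₀` gives a path `qᵢ … q₁ q₀ qᵢ₊₁ … qₙ` on the same vertex set
(`exists_rotation`), so at least `k` vertices `qᵢ` occur as first vertices of such paths. As `P` and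
`Q` share at most `k - 1` vertices, one of these `qᵢ` is off `P`. The rotation fixes the end `qₙ`,
so it can be carried out at both ends of `Q` in turn (`exists_start_notMem`).
-/

open SimpleGraph

/-- A graph is `k`-connected if it has more than `k` vertices and removing any
set of fewer than `k` vertices leaves the graph connected. -/
def IsKConnected {V : Type*} [Fintype V] (G : SimpleGraph V) (k : ℕ) : Prop :=
  k < Fintype.card V ∧
    ∀ S : Finset V, S.card < k → (G.induce ((↑S : Set V)ᶜ)).Connected

/-- A walk is a longest path if it is a path and its length is maximum among
all paths in the graph. -/
def IsLongestPath {V : Type*} (G : SimpleGraph V) {u v : V} (p : G.Walk u v) : Prop :=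
  p.IsPath ∧ ∀ ⦃a b : V⦄ (q : G.Walk a b), q.IsPath → q.length ≤ p.length

/-- The minimum degree of a `k`-connected graph is at least `k`: a vertex with fewer neighbours
would be isolated from the remaining vertices once its neighbours are removed. -/
lemma IsKConnected.le_card_neighbors {V : Type*} [Fintype V] {G : SimpleGraph V} {k : ℕ}
    (hG : IsKConnected G k) (v : V) (N : Finset V) (hN : ∀ w, w ∈ N ↔ G.Adj v w) :
    k ≤ N.card := by
  classical
  by_contra! hlt
  have hconn := hG.2 N hlt
  have hvN : v ∉ N := by simp [hN]
  obtain ⟨w, hw⟩ : ∃ w, w ∉ insert v N := by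
    by_contra! hall
    have h1 : (insert v N).card = Fintype.card V := by
      rw [Finset.eq_univ_iff_forall.2 hall, Finset.card_univ]
    have h2 := Finset.card_insert_le v N
    have h3 := hG.1
    omega
  rw [Finset.mem_insert, not_or] at hw
  obtain ⟨p⟩ := hconn.preconnected ⟨v, by simpa using hvN⟩ ⟨w, by simpa using hw.2⟩
  cases p with
  | nil => exact hw.1 rfl
  | @cons _ x _ h _ =>
    have hx : (x : V) ∉ N := fun hmem => x.2 (Finset.mem_coe.2 hmem)
    exact hx ((hN _).2 h)

/-- Pósa rotation: if the first vertex of a path is adjacent to its `(i + 1)`-st vertex, then some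
path from its `i`-th vertex to the same last vertex has the same vertices. -/
lemma exists_rotation {V : Type*} {G : SimpleGraph V} {c d : V} (Q : G.Walk c d) {i : ℕ}
    (hi : i < Q.length) (h : G.Adj c (Q.getVert (i + 1))) :
    ∃ Q' : G.Walk (Q.getVert i) d, Q'.support.Perm Q.support := by
  refine ⟨(Q.take i).reverse.append (Walk.cons h (Q.drop (i + 1))), ?_⟩
  have hd : (Q.drop (i + 1)).support = Q.support.drop (i + 1) := by
    rw [Walk.drop_support_eq_support_drop_min]
    congr 1
    omega
  rw [Walk.support_append, Walk.support_reverse, Walk.support_cons, List.tail_cons, hd,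
    Walk.support_take]
  have h' := (List.reverse_perm (Q.support.take (i + 1))).append_right (Q.support.drop (i + 1))
  rwa [List.take_append_drop] at h'

/-- All neighbours of the first vertex of a longest path lie on the path. -/
lemma IsLongestPath.mem_support_of_adj {V : Type*} {G : SimpleGraph V} {c d w : V}
    {Q : G.Walk c d} (hQ : IsLongestPath G Q) (h : G.Adj c w) : w ∈ Q.support := by
  by_contra hw
  have := hQ.2 (Walk.cons h.symm Q) (hQ.1.cons hw)
  simp at this

lemma IsLongestPath.of_perm {V : Type*} {G : SimpleGraph V} {c d c' d' : V}
    {Q : G.Walk c d} (hQ : IsLongestPath G Q) {Q' : G.Walk c' d'}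
    (h : Q'.support.Perm Q.support) : IsLongestPath G Q' := by
  have hlen : Q'.length = Q.length := by
    have := h.length_eq
    simpa using this
  refine ⟨Walk.IsPath.mk' (h.nodup_iff.2 hQ.1.support_nodup), fun a b q hq => ?_⟩
  rw [hlen]
  exact hQ.2 q hq

/-- A longest path sharing fewer than `k` vertices with a set `A` can be replaced by one with the
same vertices and the same last vertex whose first vertex avoids `A`. -/
lemma exists_start_notMem {V : Type*} [Fintype V] {G : SimpleGraph V} {k : ℕ}
    (hG : IsKConnected G k) (A : Set V) {c d : V} (Q : G.Walk c d) (hQ : IsLongestPath G Q)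
    (hint : (A ∩ {v | v ∈ Q.support}).ncard < k) :
    ∃ (c' : V) (Q' : G.Walk c' d), Q'.support.Perm Q.support ∧ c' ∉ A := by
  classical
  let T : Finset ℕ := (Finset.range Q.length).filter fun i => G.Adj c (Q.getVert (i + 1))
  by_contra! hall
  have hT : ∀ i ∈ T, i < Q.length ∧ G.Adj c (Q.getVert (i + 1)) := fun i hi => by
    simpa [T] using hi
  -- Every neighbour of `c` is some `Q.getVert (i + 1)`, so `T` has at least `k` elements.
  have h1 : k ≤ T.card := by
    refine (hG.le_card_neighbors c (Finset.univ.filter fun w => G.Adj c w) (by simp)).trans ?_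
    refine (Finset.card_le_card ?_).trans
      (Finset.card_image_le (s := T) (f := fun i => Q.getVert (i + 1)))
    intro w hw
    have hcw : G.Adj c w := by simpa using hw
    obtain ⟨n, rfl, hn⟩ := Walk.mem_support_iff_exists_getVert.1 (hQ.mem_support_of_adj hcw)
    cases n with
    | zero => simp at hcw
    | succ i =>
      exact Finset.mem_image.2
        ⟨i, Finset.mem_filter.2 ⟨Finset.mem_range.2 hn, hcw⟩, rfl⟩
  -- Each `i ∈ T` yields the vertex `Q.getVert i` of `A` on `Q`, and distinct `i` distinct vertices.
  have h2 : (T : Set ℕ).ncard ≤ (A ∩ {v | v ∈ Q.support}).ncard := by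
    refine Set.ncard_le_ncard_of_injOn Q.getVert (fun i hi => ?_) (fun i hi j hj hij => ?_)
      (Set.toFinite _)
    · obtain ⟨hlt, hadj⟩ := hT i hi
      obtain ⟨Q', hQ'⟩ := exists_rotation Q hlt hadj
      exact ⟨hall _ Q' hQ', Q.getVert_mem_support i⟩
    · exact hQ.1.getVert_injOn (hT i hi).1.le (hT j hj).1.le hij
  rw [Set.ncard_coe_finset] at h2
  omega

theorem stmt_5 {V : Type*} [Fintype V] (G : SimpleGraph V) (k : ℕ)
    (hG : IsKConnected G k) {a b c d : V} (P : G.Walk a b) (Q : G.Walk c d)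
    (hP : IsLongestPath G P) (hQ : IsLongestPath G Q)
    (hint : (({v | v ∈ P.support} ∩ {v | v ∈ Q.support}).ncard : ℤ) ≤ (k : ℤ) - 1) :
    ∃ (c' d' : V) (Q' : G.Walk c' d'), IsLongestPath G Q' ∧
      {v | v ∈ Q'.support} = {v | v ∈ Q.support} ∧
      c' ∉ P.support ∧ d' ∉ P.support := by
  obtain ⟨c', Q₁, h₁, hc'⟩ := exists_start_notMem hG {v | v ∈ P.support} Q hQ (by omega)
  have h₁' : Q₁.reverse.support.Perm Q.support := by
    rw [Walk.support_reverse]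
    exact (List.reverse_perm _).trans h₁
  have hset : {v | v ∈ Q₁.reverse.support} = {v | v ∈ Q.support} := by
    ext v
    exact h₁'.mem_iff
  obtain ⟨d', Q₂, h₂, hd'⟩ := exists_start_notMem hG {v | v ∈ P.support} Q₁.reverse
    (hQ.of_perm h₁') (by rw [hset]; omega)
  have h := h₂.trans h₁'
  exact ⟨d', c', Q₂, hQ.of_perm h, Set.ext fun v => h.mem_iff, hd', hc'⟩
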